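/- The matrices A₂ and B₂ lie in SL(2,ℂ), i.e., det A₂ = 1 and det B₂ = 1, and they satisfy A₂⁵ = B₂³ = (A₂B₂)² = −I, where I is the 2×2 identity matrix. Consequently, sending r ↦ A₂ and s ↦ B₂ defines a homomorphism σ₂ from the binary icosahedral group G = ⟨r, s ∣ r⁵ = s³ = (rs)²⟩ into SL(2,ℂ). -/

import Mathlib

noncomputable section

/-- `e₅ = exp(2πi/5)`. -/
def e5 : ℂ := Complex.exp (2 * Real.pi * Complex.I / 5)

/-- The matrix `A₂`, image of the generator `r` under the representation `σ₂`. -/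
def A2 : Matrix (Fin 2) (Fin 2) ℂ :=
  !![e5 - e5^2, -e5^2 - e5^4;
     -e5 - e5^4, -e5 - e5^3]

/-- The matrix `B₂`, image of the generator `s` under the representation `σ₂`. -/
def B2 : Matrix (Fin 2) (Fin 2) ℂ :=
  !![1, -e5^3;
     e5^2, 0]

/-- Relators `r⁵((rs)²)⁻¹` and `s³((rs)²)⁻¹` of the binary icosahedral group
`⟨r, s ∣ r⁵ = s³ = (rs)²⟩`, with `r = of 0` and `s = of 1`. -/
def icosRels : Set (FreeGroup (Fin 2)) :=
  {FreeGroup.of 0 ^ 5 * ((FreeGroup.of 0 * FreeGroup.of 1) ^ 2)⁻¹,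
   FreeGroup.of 1 ^ 3 * ((FreeGroup.of 0 * FreeGroup.of 1) ^ 2)⁻¹}

theorem e5_sum : e5^4 = -1 - e5 - e5^2 - e5^3 := by
  have hp : IsPrimitiveRoot e5 5 := by
    have := Complex.isPrimitiveRoot_exp 5 (by norm_num)
    simpa [e5] using this
  have h := hp.geom_sum_eq_zero (by norm_num)
  simp only [Finset.sum_range_succ, Finset.sum_range_zero] at h
  linear_combination h

theorem A2_det : A2.det = 1 := by
  have h := e5_sum
  rw [A2, Matrix.det_fin_two_of]
  grind

theorem B2_det : B2.det = 1 := by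
  have h := e5_sum
  rw [B2, Matrix.det_fin_two_of]
  grind

theorem A2_sq : A2 ^ 2 = (-e5^2 - e5^3) • A2 - 1 := by
  have h := e5_sum
  rw [pow_two, A2, Matrix.one_fin_two]
  ext i j
  fin_cases i <;> fin_cases j <;> simp [Matrix.mul_apply, Fin.sum_univ_two] <;> grind

theorem A2_pow : A2 ^ 5 = -1 := by
  have h := e5_sum
  have h2 := A2_sq
  generalize ht : -e5^2 - e5^3 = t at h2
  have t2 : t^2 = t + 1 := by subst ht; grind
  have h3 : A2 ^ 3 = t • A2 - t • 1 := by
    rw [pow_succ, h2, sub_mul, smul_mul_assoc, ← pow_two, h2, smul_sub, smul_smul, ← pow_two, t2, one_mul]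
    module
  have : A2 ^ 5 = A2 ^ 3 * A2 ^ 2 := by rw [← pow_add]
  rw [this, h3, h2]
  simp only [mul_sub, sub_mul, smul_mul_assoc, mul_smul_comm, one_mul, mul_one, ← pow_two, h2]
  match_scalars <;> grind

theorem B2_pow : B2 ^ 3 = -1 := by
  have h := e5_sum
  rw [pow_succ, pow_two, B2, Matrix.one_fin_two]
  ext i j
  fin_cases i <;> fin_cases j <;> simp [Matrix.mul_apply, Fin.sum_univ_two] <;> grind

theorem AB_pow : (A2 * B2) ^ 2 = -1 := by
  have h := e5_sum
  have : A2 * B2 = !![-e5^2 - e5^4, -e5^4 + 1; -e5 - e5^3 - 1 - e5^4 + (-1 - e5^3 + 1 + e5^3), e5^2 + e5^4] := by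
    rw [A2, B2]
    ext i j
    fin_cases i <;> fin_cases j <;> simp [Matrix.mul_apply, Fin.sum_univ_two] <;> grind
  rw [this, pow_two, Matrix.one_fin_two]
  ext i j
  fin_cases i <;> fin_cases j <;> simp [Matrix.mul_apply, Fin.sum_univ_two] <;> grind

/-- `A₂, B₂ ∈ SL(2,ℂ)`, they satisfy `A₂⁵ = B₂³ = (A₂B₂)² = -I`, and
consequently `r ↦ A₂`, `s ↦ B₂` defines a homomorphism `σ₂` from the binary icosahedral
group `G = ⟨r, s ∣ r⁵ = s³ = (rs)²⟩` into `SL(2,ℂ)`. -/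
theorem sigma2_representation :
    A2.det = 1 ∧ B2.det = 1 ∧
    A2 ^ 5 = -(1 : Matrix (Fin 2) (Fin 2) ℂ) ∧
    B2 ^ 3 = -(1 : Matrix (Fin 2) (Fin 2) ℂ) ∧
    (A2 * B2) ^ 2 = -(1 : Matrix (Fin 2) (Fin 2) ℂ) ∧
    ∃ σ : PresentedGroup icosRels →* Matrix.SpecialLinearGroup (Fin 2) ℂ,
      ((σ (PresentedGroup.of 0) : Matrix.SpecialLinearGroup (Fin 2) ℂ) :
          Matrix (Fin 2) (Fin 2) ℂ) = A2 ∧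
      ((σ (PresentedGroup.of 1) : Matrix.SpecialLinearGroup (Fin 2) ℂ) :
          Matrix (Fin 2) (Fin 2) ℂ) = B2 := by
  refine ⟨A2_det, B2_det, A2_pow, B2_pow, AB_pow, ?_⟩
  let f : Fin 2 → Matrix.SpecialLinearGroup (Fin 2) ℂ := ![⟨A2, A2_det⟩, ⟨B2, B2_det⟩]
  have hf : ∀ r ∈ icosRels, FreeGroup.lift f r = 1 := by
    intro r hr
    rcases hr with rfl | rfl
    · simp only [map_mul, map_pow, map_inv, FreeGroup.lift_apply_of]
      rw [mul_inv_eq_one]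
      apply Subtype.ext
      change A2 ^ 5 = (A2 * B2) ^ 2
      rw [AB_pow, A2_pow]
    · simp only [map_mul, map_pow, map_inv, FreeGroup.lift_apply_of]
      rw [mul_inv_eq_one]
      apply Subtype.ext
      change B2 ^ 3 = (A2 * B2) ^ 2
      rw [AB_pow, B2_pow]
  refine ⟨PresentedGroup.toGroup hf, ?_, ?_⟩
  · rw [PresentedGroup.toGroup.of]; rfl
  · rw [PresentedGroup.toGroup.of]; rfl

end
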